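/- There exists a 0-point, i.e., a free ultrafilter U on the natural numbers such that for every one-to-one function f : ℕ → ℕ there exists a set A ∈ U with f[A] of asymptotic density zero. -/

import Mathlib

/-- A free ultrafilter on ℕ: an ultrafilter containing no finite set. -/
def IsFreeUltrafilter (U : Ultrafilter ℕ) : Prop :=
  ∀ s : Set ℕ, s.Finite → s ∉ U

/-- `A` has asymptotic density zero: `limsup_{n→∞} |A ∩ [1,n]| / n = 0`. -/
def HasDensityZero (A : Set ℕ) : Prop :=
  Filter.limsup (fun n : ℕ => (Nat.card ↥(A ∩ Set.Icc 1 n) : ℝ) / (n : ℝ))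
    Filter.atTop = 0

/-!
A set of naturals with summable reciprocals has density zero, so it is enough to find a free
ultrafilter that contains, for each injection `g` into `ℕ`, a set whose image under `g` has
summable reciprocals.

Index by the finite subsets of `ℕ`. The reciprocals of `N` distinct naturals sum to `O(log N)`.
Hence, for fixed `k`, the weights `1 / g s` of the `k`-subsets `s` of `{0, …, q - 1}` sum to
`O(log q)`, and averaging over the `q` stars of this hypergraph produces a star of weight
`O((log q) / q)`. Taking `q = q k` large independently of `g`, we get for each `k` a star of weight
at most `2⁻ᵏ`; their union over `k` is the set wanted for `g`. Any `n` such unions meet at level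
`k = n`, because some `n`-subset contains all `n` centers; thus all of them lie in one ultrafilter.
It is not principal: for any given `s`, as `k < q k`, the center at level `k = #s` can be chosen
outside `s`.
-/

open Filter Finset Topology

section Reciprocals

lemma sum_le_sum_range_card_of_antitone {M : Type*} [AddCommMonoid M] [PartialOrder M]
    [IsOrderedAddMonoid M] {f : ℕ → M} (hf : Antitone f) (P : Finset ℕ) :
    ∑ m ∈ P, f m ≤ ∑ i ∈ range #P, f i := by
  induction P using Finset.induction_on_max with
  | empty => simp
  | insert m P hm ih =>
    have hmP : m ∉ P := fun h => (hm m h).false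
    have hcard : #P ≤ m := by
      simpa using card_le_card (show P ⊆ range m from fun x hx => mem_range.2 (hm x hx))
    rw [sum_insert hmP, card_insert_of_notMem hmP, sum_range_succ, add_comm]
    exact add_le_add ih (hf hcard)

lemma inv_natCast_le_two_mul_inv_add_one (m : ℕ) : (m : ℝ)⁻¹ ≤ 2 * ((m : ℝ) + 1)⁻¹ := by
  rcases m.eq_zero_or_pos with rfl | hm
  · simp
  · have : (1 : ℝ) ≤ m := by exact_mod_cast hm
    rw [← div_eq_mul_inv, inv_le_comm₀ (by positivity) (by positivity), inv_div]
    linarith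

lemma sum_inv_le_log_card {ι : Type*} {g : ι → ℕ} {P : Finset ι} (hg : Set.InjOn g P) :
    ∑ s ∈ P, (g s : ℝ)⁻¹ ≤ 2 * (1 + Real.log #P) := by
  have hanti : Antitone fun m : ℕ => ((m : ℝ) + 1)⁻¹ := fun a b hab => by
    dsimp only
    gcongr
  calc ∑ s ∈ P, (g s : ℝ)⁻¹
      ≤ ∑ s ∈ P, 2 * ((g s : ℝ) + 1)⁻¹ :=
        sum_le_sum fun s _ => inv_natCast_le_two_mul_inv_add_one (g s)
    _ = 2 * ∑ m ∈ P.image g, ((m : ℝ) + 1)⁻¹ := by rw [sum_image hg, mul_sum]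
    _ ≤ 2 * ∑ i ∈ range #P, ((i : ℝ) + 1)⁻¹ := by
        rw [← card_image_of_injOn hg]
        exact mul_le_mul_of_nonneg_left (sum_le_sum_range_card_of_antitone hanti _) zero_le_two
    _ = 2 * (harmonic #P : ℝ) := by simp [harmonic]
    _ ≤ 2 * (1 + Real.log #P) := by gcongr; exact harmonic_le_one_add_log _

lemma eventually_add_mul_log_le (a b : ℝ) {ε : ℝ} (hε : 0 < ε) :
    ∀ᶠ q : ℕ in atTop, a + b * Real.log q ≤ ε * q := by
  have hlittle : (fun x : ℝ => a + b * Real.log x) =o[atTop] (id : ℝ → ℝ) :=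
    (Asymptotics.isLittleO_const_id_atTop a).add (Real.isLittleO_log_id_atTop.const_mul_left b)
  filter_upwards [(hlittle.comp_tendsto tendsto_natCast_atTop_atTop).bound hε] with q hq
  simpa using (le_abs_self _).trans hq

lemma summable_iUnion_coe_finset {ι κ : Type*} {w : ι → ℝ} (hw : ∀ s, 0 ≤ w s) {S : κ → Finset ι}
    (hS : Summable fun k => ∑ s ∈ S k, w s) :
    Summable fun s : ⋃ k, (S k : Set ι) => w s := by
  have hfiber (k : κ) : ∑' s : (S k : Set ι), w s = ∑ s ∈ S k, w s := Finset.tsum_subtype' (S k) w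
  have hsigma : Summable fun p : Σ k, (S k : Set ι) => w p.2 := by
    refine (summable_sigma_of_nonneg fun _ => hw _).2 ⟨fun k => Summable.of_finite, ?_⟩
    simpa only [hfiber] using hS
  have hsurj := Set.sigmaToiUnion_surjective fun k => (S k : Set ι)
  have hval (s : ⋃ k, (S k : Set ι)) : ((Function.surjInv hsurj s).2 : ι) = s :=
    congrArg Subtype.val (Function.surjInv_eq hsurj s)
  simpa only [Function.comp_def, hval] using
    hsigma.comp_injective (Function.injective_surjInv hsurj)

/-- Writing the proportion of `A` in `[1, n]` as `∑_{a ∈ A} 1_{1 ≤ a ≤ n} / n`, the summands tend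
to zero and are dominated by `1 / a`. -/
theorem hasDensityZero_of_summable_inv {A : Set ℕ} (hA : Summable fun a : A => ((a : ℕ) : ℝ)⁻¹) :
    HasDensityZero A := by
  let u (n : ℕ) : ℕ → ℝ := (Set.Icc 1 n).indicator fun _ => (n : ℝ)⁻¹
  have hcount (n : ℕ) : ∑' a : A, u n a = (Nat.card ↥(A ∩ Set.Icc 1 n) : ℝ) / n := by
    rw [_root_.tsum_subtype, Set.indicator_indicator, ← _root_.tsum_subtype, tsum_const,
      nsmul_eq_mul, div_eq_mul_inv]
  have hlim (a : ℕ) : Tendsto (u · a) atTop (𝓝 0) :=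
    squeeze_zero (fun n => Set.indicator_nonneg (fun _ _ => by positivity) a)
      (fun n => Set.indicator_le_self' (fun _ _ => by positivity) a)
      tendsto_inv_atTop_nhds_zero_nat
  have hbound (n a : ℕ) : ‖u n a‖ ≤ (a : ℝ)⁻¹ := by
    by_cases h : a ∈ Set.Icc 1 n
    · have ha : (0 : ℝ) < a := by exact_mod_cast h.1
      simp only [u, Set.indicator_of_mem h, norm_inv, Real.norm_natCast]
      exact inv_anti₀ ha (by exact_mod_cast h.2)
    · simp only [u, Set.indicator_of_notMem h, norm_zero]
      positivity
  have htsum := tendsto_tsum_of_dominated_convergence hA (fun a => hlim a)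
    (.of_forall fun n a => hbound n a)
  simp only [hcount, tsum_zero] at htsum
  exact htsum.limsup_eq

end Reciprocals

section Stars

variable {α : Type*}

lemma sum_inv_powersetCard_le {X : Finset α} {k : ℕ} {g : Finset α → ℕ}
    (hg : Set.InjOn g (X.powersetCard k)) :
    ∑ s ∈ X.powersetCard k, (g s : ℝ)⁻¹ ≤ 2 * (1 + k * Real.log #X) := by
  have hlog : Real.log ((#X).choose k) ≤ k * Real.log #X := by
    rcases ((#X).choose k).eq_zero_or_pos with hzero | hpos
    · rw [hzero, Nat.cast_zero, Real.log_zero]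
      positivity
    · rw [← Real.log_pow]
      exact Real.log_le_log (by exact_mod_cast hpos) (by exact_mod_cast Nat.choose_le_pow _ _)
  calc ∑ s ∈ X.powersetCard k, (g s : ℝ)⁻¹
      ≤ 2 * (1 + Real.log ((#X).choose k)) := by
        simpa only [card_powersetCard] using sum_inv_le_log_card hg
    _ ≤ 2 * (1 + k * Real.log #X) := by gcongr

variable [DecidableEq α]

/-- The star with center `v` in the complete `k`-uniform hypergraph on the vertex set `X`, empty if
`v ∉ X`. Choosing a star of small weight for each `k` gives the members of the ultrafilter. -/
def starFamily (X : Finset α) (k : ℕ) (v : α) : Finset (Finset α) :=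
  {s ∈ X.powersetCard k | v ∈ s}

lemma mem_starFamily {X s : Finset α} {k : ℕ} {v : α} :
    s ∈ starFamily X k v ↔ (s ⊆ X ∧ #s = k) ∧ v ∈ s := by
  rw [starFamily, mem_filter, mem_powersetCard]

lemma sum_sum_starFamily {M : Type*} [AddCommMonoid M] (X : Finset α) (k : ℕ) (w : Finset α → M) :
    ∑ v ∈ X, ∑ s ∈ starFamily X k v, w s = k • ∑ s ∈ X.powersetCard k, w s := by
  rw [sum_comm' (t' := X.powersetCard k) (s' := id), smul_sum]
  · refine sum_congr rfl fun s hs => ?_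
    rw [sum_const, id, (mem_powersetCard.1 hs).2]
  · intro v s
    simp only [mem_starFamily, mem_powersetCard, id]
    exact ⟨fun h => ⟨h.2.2, h.2.1⟩, fun h => ⟨h.2.1 h.1, h.2, h.1⟩⟩

lemma exists_card_mul_sum_starFamily_le {X : Finset α} (hX : X.Nonempty) (k : ℕ)
    (w : Finset α → ℝ) :
    ∃ v ∈ X, #X * ∑ s ∈ starFamily X k v, w s ≤ k * ∑ s ∈ X.powersetCard k, w s := by
  refine exists_le_of_sum_le hX ?_
  rw [← mul_sum, sum_sum_starFamily, sum_const, nsmul_eq_mul, nsmul_eq_mul]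

lemma exists_card_mul_sum_inv_starFamily_le {X : Finset α} (hX : X.Nonempty) {k : ℕ}
    {g : Finset α → ℕ} (hg : Set.InjOn g (X.powersetCard k)) :
    ∃ v ∈ X, #X * ∑ s ∈ starFamily X k v, (g s : ℝ)⁻¹ ≤ k * (2 * (1 + k * Real.log #X)) := by
  obtain ⟨v, hv, hle⟩ := exists_card_mul_sum_starFamily_le hX k fun s => (g s : ℝ)⁻¹
  exact ⟨v, hv, hle.trans (by gcongr; exact sum_inv_powersetCard_le hg)⟩

lemma eventually_exists_sum_inv_starFamily_le (k : ℕ) {ε : ℝ} (hε : 0 < ε) :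
    ∀ᶠ q : ℕ in atTop, ∀ g : Finset ℕ → ℕ, Function.Injective g →
      ∃ v < q, ∑ s ∈ starFamily (range q) k v, (g s : ℝ)⁻¹ ≤ ε := by
  filter_upwards [eventually_add_mul_log_le (k * 2) (k * 2 * k) hε, eventually_gt_atTop 0]
    with q hlog hq g hg
  obtain ⟨v, hv, hle⟩ :=
    exists_card_mul_sum_inv_starFamily_le (nonempty_range_iff.2 hq.ne') (k := k) hg.injOn
  refine ⟨v, mem_range.1 hv, le_of_mul_le_mul_left ?_ (Nat.cast_pos.2 hq)⟩
  rw [card_range] at hle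
  linarith

end Stars

section StarUnion

/-- The union over `k` of the stars with center `c k` in the complete `k`-uniform hypergraphs on
`{0, …, q k - 1}`: for fixed `q`, these sets generate the filter that is extended to an
ultrafilter. -/
def starUnion (q c : ℕ → ℕ) : Set (Finset ℕ) :=
  ⋃ k, (starFamily (range (q k)) k (c k) : Set (Finset ℕ))

variable {q : ℕ → ℕ}

lemma mem_starUnion {c : ℕ → ℕ} {s : Finset ℕ} :
    s ∈ starUnion q c ↔ s ⊆ range (q #s) ∧ c #s ∈ s := by
  simp only [starUnion, Set.mem_iUnion, mem_coe, mem_starFamily]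
  exact ⟨fun ⟨_, ⟨hs, rfl⟩, hc⟩ => ⟨hs, hc⟩, fun ⟨hs, hc⟩ => ⟨_, ⟨hs, rfl⟩, hc⟩⟩

lemma exists_forall_mem_starUnion (hq : ∀ k, k ≤ q k) (C : Finset (ℕ → ℕ))
    (hC : ∀ c ∈ C, ∀ k, c k < q k) : ∃ s, ∀ c ∈ C, s ∈ starUnion q c := by
  have hcenters : C.image (· #C) ⊆ range (q #C) :=
    image_subset_iff.2 fun c hc => mem_range.2 (hC c hc _)
  obtain ⟨s, hs, hsq, hcard⟩ :=
    exists_subsuperset_card_eq hcenters card_image_le (by simpa using hq #C)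
  refine ⟨s, fun c hc => mem_starUnion.2 ?_⟩
  rw [hcard]
  exact ⟨hsq, hs (mem_image_of_mem (· #C) hc)⟩

lemma exists_ultrafilter_starUnion_mem (hq : ∀ k, k ≤ q k) :
    ∃ V : Ultrafilter (Finset ℕ), ∀ c : ℕ → ℕ, (∀ k, c k < q k) → starUnion q c ∈ V := by
  classical
  obtain ⟨V, hV⟩ := Ultrafilter.exists_ultrafilter_of_finite_inter_nonempty
    (starUnion q '' {c | ∀ k, c k < q k}) fun T hT => by
      obtain ⟨C, hC, rfl⟩ := subset_set_image_iff.1 hT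
      obtain ⟨s, hs⟩ := exists_forall_mem_starUnion hq C hC
      exact ⟨s, by simpa using hs⟩
  exact ⟨V, fun c hc => hV (Set.mem_image_of_mem _ hc)⟩

lemma exists_notMem_starUnion (hq : ∀ k, k < q k) (s : Finset ℕ) :
    ∃ c : ℕ → ℕ, (∀ k, c k < q k) ∧ s ∉ starUnion q c := by
  obtain ⟨v, hv, hvs⟩ : ∃ v ∈ range (q #s), v ∉ s :=
    exists_mem_notMem_of_card_lt_card (by simpa using hq #s)
  refine ⟨Function.update 0 #s v, fun k => ?_, fun hs => hvs ?_⟩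
  · rcases eq_or_ne k #s with rfl | hk
    · simpa using hv
    · simpa [hk] using (Nat.zero_le k).trans_lt (hq k)
  · simpa using (mem_starUnion.1 hs).2

lemma ne_pure_of_starUnion_mem {V : Ultrafilter (Finset ℕ)} (hq : ∀ k, k < q k)
    (hV : ∀ c : ℕ → ℕ, (∀ k, c k < q k) → starUnion q c ∈ V) (s : Finset ℕ) : V ≠ pure s := by
  rintro rfl
  obtain ⟨c, hc, hs⟩ := exists_notMem_starUnion hq s
  exact hs (hV c hc)

lemma exists_ultrafilter_finset_summable_inv :
    ∃ V : Ultrafilter (Finset ℕ), (∀ s, V ≠ pure s) ∧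
      ∀ g : Finset ℕ → ℕ, Function.Injective g →
        ∃ A ∈ V, Summable fun s : A => (g s : ℝ)⁻¹ := by
  choose q hq hlight using fun k : ℕ => ((eventually_gt_atTop k).and
    (eventually_exists_sum_inv_starFamily_le k (ε := (1 / 2) ^ k) (by positivity))).exists
  obtain ⟨V, hV⟩ := exists_ultrafilter_starUnion_mem fun k => (hq k).le
  refine ⟨V, ne_pure_of_starUnion_mem hq hV, fun g hg => ?_⟩
  choose c hc hle using fun k => hlight k g hg
  have hnonneg (s : Finset ℕ) : 0 ≤ (g s : ℝ)⁻¹ := by positivity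
  have hsum : Summable fun k => ∑ s ∈ starFamily (range (q k)) k (c k), (g s : ℝ)⁻¹ :=
    summable_geometric_two.of_nonneg_of_le (fun k => sum_nonneg fun s _ => hnonneg s) hle
  exact ⟨starUnion q c, hV c hc, summable_iUnion_coe_finset hnonneg hsum⟩

end StarUnion

lemma isFreeUltrafilter_map_of_forall_ne_pure {β : Type*} {V : Ultrafilter β}
    (hV : ∀ x, V ≠ pure x) {e : β → ℕ} (he : Function.Injective e) :
    IsFreeUltrafilter (V.map e) := fun _ hs hmem =>
  have ⟨x, _, hx⟩ := Ultrafilter.eq_pure_of_finite_mem (hs.preimage he.injOn) hmem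
  hV x hx

theorem exists_zero_point_general :
    ∃ U : Ultrafilter ℕ, IsFreeUltrafilter U ∧
      ∀ f : ℕ → ℕ, Function.Injective f →
        ∃ A ∈ U, Summable fun m : f '' A => ((m : ℕ) : ℝ)⁻¹ := by
  obtain ⟨V, hpure, hV⟩ := exists_ultrafilter_finset_summable_inv
  have he := Encodable.encode_injective (α := Finset ℕ)
  refine ⟨V.map Encodable.encode, isFreeUltrafilter_map_of_forall_ne_pure hpure he, fun f hf => ?_⟩
  obtain ⟨A, hA, hsum⟩ := hV _ (hf.comp he)
  refine ⟨Encodable.encode '' A, image_mem_map hA, ?_⟩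
  rw [← Set.image_comp]
  exact (Equiv.Set.image _ A (hf.comp he)).summable_iff.1 hsum

/-- There exists a 0-point: a free ultrafilter `U` on ℕ such that for every
one-to-one function `f : ℕ → ℕ` there is a set `A ∈ U` with `f '' A` of
asymptotic density zero. -/
theorem exists_zero_point :
    ∃ U : Ultrafilter ℕ, IsFreeUltrafilter U ∧
      ∀ f : ℕ → ℕ, Function.Injective f →
        ∃ A ∈ U, HasDensityZero (f '' A) := by
  obtain ⟨U, hfree, hU⟩ := exists_zero_point_general
  exact ⟨U, hfree, fun f hf =>
    (hU f hf).imp fun _ hA => hA.imp_right hasDensityZero_of_summable_inv⟩
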